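/- Let H be a real Hilbert space and let a : H × H → ℝ be a bilinear form of the form a(u, v) = c(u, v) + ⟨K u, v⟩, where c is a bounded bilinear form that is coercive (there are M ≥ 0 and α > 0 with |c(u, v)| ≤ M‖u‖‖v‖ and c(v, v) ≥ α‖v‖² for all u, v ∈ H) and K : H →L H is a compact operator. Then the homogeneous problem has only the zero solution (i.e., a(u, v) = 0 for all v ∈ H implies u = 0) if and only if for every continuous linear functional g on H there exists a unique u ∈ H with a(u, v) = g(v) for all v ∈ H. -/

import Mathlib

/-!
Lax–Milgram writes `c(u, v) = ⟪C u, v⟫` with `C` invertible, so `a(u, v) = ⟪(C + K) u, v⟫`.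
Nondegeneracy of the inner product turns uniqueness into injectivity of `C + K`, and Riesz
representation turns well-posedness into its bijectivity. Since `C + K = C (1 + C⁻¹ K)` with `C⁻¹ K`
compact, the two are equivalent by the Fredholm alternative.
-/

open RealInnerProductSpace

section FredholmAlternative

variable {𝕜 E F : Type*} [NontriviallyNormedField 𝕜]
  [NormedAddCommGroup E] [NormedSpace 𝕜 E] [CompleteSpace E]
  [NormedAddCommGroup F] [NormedSpace 𝕜 F]

theorem injective_one_add_iff_bijective_of_isCompactOperator {T : E →L[𝕜] E}
    (hT : IsCompactOperator T) :
    Function.Injective (1 + T : E →L[𝕜] E) ↔ Function.Bijective (1 + T : E →L[𝕜] E) := by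
  have hasEigenvalue_iff :
      Module.End.HasEigenvalue (T : Module.End 𝕜 E) (-1) ↔
        ¬ Function.Injective (1 + T : E →L[𝕜] E) := by
    rw [Module.End.hasEigenvalue_iff, ne_eq, Submodule.eq_bot_iff, injective_iff_map_eq_zero]
    simp [eq_neg_iff_add_eq_zero, add_comm]
  have mem_spectrum_iff : -1 ∈ spectrum 𝕜 T ↔ ¬ Function.Bijective (1 + T : E →L[𝕜] E) := by
    rw [spectrum.mem_iff, map_neg, map_one, ← neg_add', IsUnit.neg_iff,
      ContinuousLinearMap.isUnit_iff_bijective]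
  rw [← not_iff_not, ← hasEigenvalue_iff, ← mem_spectrum_iff]
  exact hT.hasEigenvalue_iff_mem_spectrum (neg_ne_zero.mpr one_ne_zero)

theorem injective_equiv_add_iff_bijective_of_isCompactOperator (C : E ≃L[𝕜] F) {K : E →L[𝕜] F}
    (hK : IsCompactOperator K) :
    Function.Injective (C + K : E →L[𝕜] F) ↔ Function.Bijective (C + K : E →L[𝕜] F) := by
  let T : E →L[𝕜] E := C.symm ∘L K
  have hT : IsCompactOperator T := hK.clm_comp (C.symm : F →L[𝕜] E)
  have factorization : (C + K : E →L[𝕜] F) = C ∘ (1 + T : E →L[𝕜] E) := by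
    ext u
    simp [T]
  rw [factorization, C.injective.of_comp_iff, C.bijective.of_comp_iff']
  exact injective_one_add_iff_bijective_of_isCompactOperator hT

end FredholmAlternative

section InnerProduct

variable {𝕜 E : Type*} [RCLike 𝕜] [NormedAddCommGroup E] [InnerProductSpace 𝕜 E]

theorem injective_iff_forall_inner_eq_zero {G F : Type*} [AddGroup G] [FunLike F G E]
    [AddMonoidHomClass F G E] (L : F) :
    Function.Injective L ↔ ∀ u, (∀ v, inner 𝕜 (L u) v = 0) → u = 0 := by
  rw [injective_iff_map_eq_zero]
  have eq_zero_iff (x : E) : x = 0 ↔ ∀ v, inner 𝕜 x v = 0 := by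
    simpa only [inner_zero_left] using ext_iff_inner_right 𝕜 (x := x) (y := 0)
  simp only [← eq_zero_iff]

theorem bijective_iff_forall_existsUnique_inner_eq [CompleteSpace E] {X : Type*} (f : X → E) :
    Function.Bijective f ↔
      ∀ g : StrongDual 𝕜 E, ∃! u, ∀ v, inner 𝕜 (f u) v = g v := by
  rw [← (InnerProductSpace.toDual 𝕜 E).bijective.of_comp_iff' f,
    Function.bijective_iff_existsUnique]
  simp only [Function.comp_apply, ContinuousLinearMap.ext_iff, InnerProductSpace.toDual_apply_apply]

end InnerProduct

theorem exists_continuousLinearEquiv_inner_eq_of_coercive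
    {H : Type*} [NormedAddCommGroup H] [InnerProductSpace ℝ H] [CompleteSpace H]
    {c : H →ₗ[ℝ] H →ₗ[ℝ] ℝ} {M α : ℝ} (hbound : ∀ u v, |c u v| ≤ M * ‖u‖ * ‖v‖)
    (hα : 0 < α) (hcoer : ∀ v, α * ‖v‖ ^ 2 ≤ c v v) :
    ∃ C : H ≃L[ℝ] H, ∀ u v, ⟪C u, v⟫ = c u v := by
  have coercive : IsCoercive (c.mkContinuous₂ M hbound) :=
    ⟨α, hα, fun v => by simpa only [LinearMap.mkContinuous₂_apply, mul_assoc, sq] using hcoer v⟩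
  exact ⟨coercive.continuousLinearEquivOfBilin, coercive.continuousLinearEquivOfBilin_apply⟩

/-- **Uniqueness implies well-posedness** for bilinear forms of Fredholm type.
Let `a(u,v) = c(u,v) + ⟪K u, v⟫` on a real Hilbert space `H`, where `c` is a bounded
coercive bilinear form and `K` is a compact operator.  Then the homogeneous problem
has only the zero solution iff for every continuous linear functional `g` there is a
unique `u` with `a(u,v) = g(v)` for all `v`. -/
theorem uniqueness_iff_wellPosed
    {H : Type*} [NormedAddCommGroup H] [InnerProductSpace ℝ H] [CompleteSpace H]
    (a : H → H → ℝ) (c : H →ₗ[ℝ] H →ₗ[ℝ] ℝ) (K : H →L[ℝ] H)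
    (M : ℝ) (hM : 0 ≤ M) (hcbound : ∀ u v : H, |c u v| ≤ M * ‖u‖ * ‖v‖)
    (α : ℝ) (hα : 0 < α) (hccoer : ∀ v : H, α * ‖v‖ ^ 2 ≤ c v v)
    (hK : IsCompactOperator K)
    (ha : ∀ u v : H, a u v = c u v + ⟪K u, v⟫) :
    (∀ u : H, (∀ v : H, a u v = 0) → u = 0) ↔
      (∀ g : H →L[ℝ] ℝ, ∃! u : H, ∀ v : H, a u v = g v) := by
  obtain ⟨C, hC⟩ := exists_continuousLinearEquiv_inner_eq_of_coercive hcbound hα hccoer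
  have inner_eq (u v : H) : a u v = ⟪(C + K : H →L[ℝ] H) u, v⟫ := by
    rw [ha, add_apply, inner_add_left, ContinuousLinearEquiv.coe_coe, hC]
  simp only [inner_eq]
  rw [← injective_iff_forall_inner_eq_zero, ← bijective_iff_forall_existsUnique_inner_eq]
  exact injective_equiv_add_iff_bijective_of_isCompactOperator C hK
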